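/- Consider the periodic checkerboard potential: assume additionally 1/(2ε) ∈ ℕ and V(x) = α whenever ⌊x_i/ε⌋ is even for every i = 1, …, d, and V(x) = β otherwise, and set N := (2ε)^{-d}. There exist constants c, c' > 0 depending only on d such that for every integer ℓ ≥ 2, if β ≥ c' (ℓ−1)² ε^{-2}, then μ_{N ℓ^d + 1} ≥ c (ℓ−1)²/ε². (Lemma 5.3 of the paper: lower eigenvalue bound for the periodic potential.) -/

import Mathlib

open MeasureTheory Real
open scoped BigOperators RealInnerProductSpace

noncomputable section

/-- A function on `ℝ^d` is periodic if it is `ℤ^d`-periodic. -/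
def ZPeriodic {d : ℕ} (f : (Fin d → ℝ) → ℝ) : Prop :=
  ∀ (x : Fin d → ℝ) (k : Fin d → ℤ), f (x + fun i => (k i : ℝ)) = f x

/-- The unit cell `[0,1)^d`. -/
def unitCell (d : ℕ) : Set (Fin d → ℝ) := Set.univ.pi fun _ => Set.Ico (0 : ℝ) 1

/-- Squared Euclidean norm `|∇f(x)|²` of the (a.e. defined) gradient of `f`. -/
def gradSq {d : ℕ} (f : (Fin d → ℝ) → ℝ) (x : Fin d → ℝ) : ℝ :=
  ∑ i, (fderiv ℝ f x (Pi.single i 1)) ^ 2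

/-- `‖v‖²`, the squared `L²` norm over the unit cell. -/
def l2sq {d : ℕ} (v : (Fin d → ℝ) → ℝ) : ℝ := ∫ x in unitCell d, (v x) ^ 2

/-- `‖∇v‖²_{L²([0,1)^d)}`. -/
def gradL2sq {d : ℕ} (v : (Fin d → ℝ) → ℝ) : ℝ := ∫ x in unitCell d, gradSq v x

/-- `|||v|||²`, the squared energy norm over the unit cell. -/
def energySq {d : ℕ} (V v : (Fin d → ℝ) → ℝ) : ℝ :=
  ∫ x in unitCell d, (gradSq v x + V x * (v x) ^ 2)

/-- The open grid cell of side `ε` with lower-left corner `ε q`. -/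
def gridCell {d : ℕ} (ε : ℝ) (q : Fin d → ℤ) : Set (Fin d → ℝ) :=
  {x | ∀ i, (q i : ℝ) * ε < x i ∧ x i < ((q i : ℝ) + 1) * ε}

/-- `V` is a periodic two-valued potential, constant on each (open) grid cell. -/
def IsGridPotential {d : ℕ} (ε α β : ℝ) (V : (Fin d → ℝ) → ℝ) : Prop :=
  ZPeriodic V ∧ (∀ x, V x = α ∨ V x = β) ∧
    ∀ q : Fin d → ℤ, (∀ x ∈ gridCell ε q, V x = α) ∨ (∀ x ∈ gridCell ε q, V x = β)

/-- The axis-aligned closed cube of side `ε m` which is the union of the grid cells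
`q + r`, `r ∈ {0, …, m-1}^d`. -/
def gridCube {d : ℕ} (ε : ℝ) (q : Fin d → ℤ) (m : ℕ) : Set (Fin d → ℝ) :=
  {x | ∀ i, (q i : ℝ) * ε ≤ x i ∧ x i ≤ ((q i : ℝ) + (m : ℝ)) * ε}

/-- An α-cube: a closed cube, union of grid cells, contained in `closure {V = α}`. -/
def IsAlphaCube {d : ℕ} (ε α : ℝ) (V : (Fin d → ℝ) → ℝ) (q : Fin d → ℤ) (m : ℕ) : Prop :=
  1 ≤ m ∧ gridCube ε q m ⊆ closure {x | V x = α}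

/-- A maximal α-cube: an α-cube maximal under inclusion among α-cubes. -/
def IsMaxAlphaCube {d : ℕ} (ε α : ℝ) (V : (Fin d → ℝ) → ℝ) (q : Fin d → ℤ) (m : ℕ) : Prop :=
  IsAlphaCube ε α V q m ∧ ∀ q' m', IsAlphaCube ε α V q' m' →
    gridCube ε q m ⊆ gridCube ε q' m' → gridCube ε q m = gridCube ε q' m'

/-- `ε L` is the largest side length of a maximal α-cube (with `L = 1` if no α-cube exists):
the maximal width of a potential valley. -/
def IsValleyWidth {d : ℕ} (ε α : ℝ) (V : (Fin d → ℝ) → ℝ) (L : ℕ) : Prop :=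
  IsGreatest {m | ∃ q, IsMaxAlphaCube ε α V q m} L ∨
    ((∀ q m, ¬ IsAlphaCube ε α V q m) ∧ L = 1)

/-- `κ` is the maximal number of maximal α-cubes containing a common α-grid cell. -/
def IsOverlapNumber {d : ℕ} (ε α : ℝ) (V : (Fin d → ℝ) → ℝ) (κ : ℕ) : Prop :=
  IsGreatest {n | ∃ q : Fin d → ℤ, (∀ x ∈ gridCell ε q, V x = α) ∧
    n = Nat.card {p : (Fin d → ℤ) × ℕ //
      IsMaxAlphaCube ε α V p.1 p.2 ∧ gridCell ε q ⊆ gridCube ε p.1 p.2}} κ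

/-- A cut-off function `η` with constant `Cη`: periodic, `C¹`, `[0,1]`-valued, equal to `1`
on every α-cell, vanishing on the closed concentric subcube of side `ε/2` of every β-cell,
with `‖∇η‖_∞ ≤ Cη / ε`. -/
structure IsCutoff {d : ℕ} (ε Cη α β : ℝ) (V η : (Fin d → ℝ) → ℝ) : Prop where
  periodic : ZPeriodic η
  contDiff : ContDiff ℝ 1 η
  mem_Icc : ∀ x, η x ∈ Set.Icc (0 : ℝ) 1
  eq_one : ∀ q : Fin d → ℤ, (∀ x ∈ gridCell ε q, V x = α) → ∀ x ∈ gridCell ε q, η x = 1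
  eq_zero : ∀ q : Fin d → ℤ, (∀ x ∈ gridCell ε q, V x = β) → ∀ x : Fin d → ℝ,
    (∀ i, ((q i : ℝ) + 1/4) * ε ≤ x i ∧ x i ≤ ((q i : ℝ) + 3/4) * ε) → η x = 0
  grad_le : ∀ x, ‖fderiv ℝ η x‖ ≤ Cη / ε


/-- The set of periodic Lipschitz functions on `ℝ^d`. -/
def PeriodicLipschitz (d : ℕ) : Set ((Fin d → ℝ) → ℝ) :=
  {v | ZPeriodic v ∧ ∃ K : NNReal, LipschitzWith K v}

/-- The `m`-th Courant min-max value `μ_m` of the Schrödinger form: the infimum over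
`m`-dimensional subspaces `W` of the space of periodic Lipschitz functions of
`sup {|||v|||²/‖v‖² : v ∈ W, v ≠ 0}`, expressed as the infimum of all upper bounds `M`
of the Rayleigh quotient on some such subspace. -/
def minmaxVal (d : ℕ) (V : (Fin d → ℝ) → ℝ) (m : ℕ) : ℝ :=
  sInf {M : ℝ | ∃ W : Submodule ℝ ((Fin d → ℝ) → ℝ),
    (W : Set ((Fin d → ℝ) → ℝ)) ⊆ PeriodicLipschitz d ∧
    Module.finrank ℝ W = m ∧
    ∀ v ∈ W, v ≠ 0 → energySq V v ≤ M * l2sq v}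

/-!
The proof is Neumann bracketing. Each of the `N` valleys is cut into `ℓ ^ d` cubes of side `ε / ℓ`.
A space of dimension `N * ℓ ^ d + 1` contains some `v ≠ 0` whose mean over every cube vanishes. On
the cubes the Poincaré inequality bounds `∫ v²` by a multiple of `(ε / ℓ)² ∫ |∇v|²`, and off the
valleys `V ≥ β` controls `v²`, so the Rayleigh quotient of `v` is at least of order `(ℓ / ε)²`.

For a convex set `Q`, the Poincaré inequality comes from averaging `|v x - v y|²` over `Q × Q` and
bounding it by the integral of `|∇v|²` along the segment from `y` to `x`. At a point
`(1 - t) y + t x` with `t ≥ 1/2` one integrates first in `x`, which costs only the Jacobian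
`t⁻ᵈ ≤ 2ᵈ`; for `t ≤ 1/2` the roles of `x` and `y` are exchanged.

Since `sInf ∅ = 0` in `ℝ`, a lower bound for `minmaxVal` also needs an admissible subspace of every
dimension: polynomials in `sin (2π x₁)`, on which the Rayleigh quotient is bounded because all norms
on a finite-dimensional space are equivalent.
-/

open scoped ENNReal NNReal

section Poincare

open AffineMap

lemma sq_lintegral_le_lintegral_sq {α : Type*} [MeasurableSpace α] {μ : Measure α}
    [IsProbabilityMeasure μ] {f : α → ℝ≥0∞} (hf : AEMeasurable f μ) :
    (∫⁻ x, f x ∂μ) ^ 2 ≤ ∫⁻ x, f x ^ 2 ∂μ := by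
  have hnorm : eLpNorm f 1 μ ≤ eLpNorm f (2 : ℝ≥0) μ :=
    eLpNorm_le_eLpNorm_of_exponent_le (by norm_num) hf.aestronglyMeasurable
  have hsq : eLpNorm f (2 : ℝ≥0) μ ^ (2 : ℝ) = ∫⁻ x, f x ^ (2 : ℝ) ∂μ := by
    simpa using eLpNorm_nnreal_pow_eq_lintegral (f := f) (μ := μ) (p := 2) two_ne_zero
  simp only [eLpNorm_one_eq_lintegral_enorm, enorm_eq_self] at hnorm
  simp only [ENNReal.rpow_two] at hsq
  exact hsq ▸ pow_le_pow_left' hnorm 2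

lemma lintegral_lintegral_lintegral_rotate {α β γ : Type*} [MeasurableSpace α]
    [MeasurableSpace β] [MeasurableSpace γ] {μ : Measure α} {ν : Measure β} {ρ : Measure γ}
    [SFinite μ] [SFinite ν] [SFinite ρ] {f : α × β × γ → ℝ≥0∞} (hf : Measurable f) :
    ∫⁻ x, ∫⁻ y, ∫⁻ z, f (x, y, z) ∂ρ ∂ν ∂μ = ∫⁻ z, ∫⁻ x, ∫⁻ y, f (x, y, z) ∂ν ∂μ ∂ρ := by
  have hyz (x : α) : ∫⁻ y, ∫⁻ z, f (x, y, z) ∂ρ ∂ν = ∫⁻ z, ∫⁻ y, f (x, y, z) ∂ν ∂ρ :=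
    lintegral_lintegral_swap (by fun_prop)
  simp_rw [hyz]
  refine lintegral_lintegral_swap (Measurable.aemeasurable ?_)
  exact Measurable.lintegral_prod_right' (ν := ν)
    (f := fun p : (α × γ) × β => f (p.1.1, p.2, p.1.2)) (by fun_prop)

lemma integral_sq_eq_toReal_lintegral_enorm_sq {α : Type*} [MeasurableSpace α] {ν : Measure α}
    {f : α → ℝ} (hf : AEStronglyMeasurable f ν) :
    ∫ x, f x ^ 2 ∂ν = (∫⁻ x, ‖f x‖ₑ ^ 2 ∂ν).toReal := by
  simpa using integral_norm_eq_lintegral_enorm (hf.pow 2)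

lemma lintegral_enorm_sub_sq_of_integral_eq_zero {α : Type*} [MeasurableSpace α] {ν : Measure α}
    [IsFiniteMeasure ν] {f : α → ℝ} (hf : MemLp f 2 ν) (hmean : ∫ x, f x ∂ν = 0) (c : ℝ) :
    ∫⁻ x, ‖f x - c‖ₑ ^ 2 ∂ν = (∫⁻ x, ‖f x‖ₑ ^ 2 ∂ν) + ‖c‖ₑ ^ 2 * ν Set.univ := by
  have hfi : Integrable f ν := hf.integrable one_le_two
  have hfi2 : Integrable (fun x => f x ^ 2) ν := hf.integrable_sq
  have hsub : MemLp (fun x => f x - c) 2 ν := hf.sub (memLp_const c)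
  have hsq : ∫ x, (f x - c) ^ 2 ∂ν = ∫ x, f x ^ 2 ∂ν + c ^ 2 * ν.real Set.univ := by
    simp only [sub_sq]
    rw [integral_add (by fun_prop) (by fun_prop), integral_sub (by fun_prop) (by fun_prop),
      integral_mul_const, integral_const_mul, hmean, integral_const, smul_eq_mul]
    ring
  have henorm (a : ℝ) : ‖a‖ₑ ^ 2 = ENNReal.ofReal (a ^ 2) := by
    rw [← enorm_pow, Real.enorm_of_nonneg (sq_nonneg a)]
  simp_rw [henorm]
  rw [← ofReal_integral_eq_lintegral_ofReal hsub.integrable_sq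
      (ae_of_all _ fun x => sq_nonneg _), hsq,
    ← ofReal_integral_eq_lintegral_ofReal hfi2 (ae_of_all _ fun x => sq_nonneg _),
    ENNReal.ofReal_add (by positivity) (by positivity), ENNReal.ofReal_mul (sq_nonneg c),
    ofReal_measureReal]

lemma lintegral_lintegral_enorm_sub_sq_of_integral_eq_zero {α : Type*} [MeasurableSpace α]
    {ν : Measure α} [IsFiniteMeasure ν] {f : α → ℝ} (hf : MemLp f 2 ν)
    (hmean : ∫ x, f x ∂ν = 0) :
    ∫⁻ y, ∫⁻ x, ‖f x - f y‖ₑ ^ 2 ∂ν ∂ν = 2 * (∫⁻ x, ‖f x‖ₑ ^ 2 ∂ν) * ν Set.univ := by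
  simp_rw [lintegral_enorm_sub_sq_of_integral_eq_zero hf hmean]
  rw [lintegral_add_left measurable_const, lintegral_const,
    lintegral_mul_const' _ _ (measure_ne_top ν _)]
  ring

lemma memLp_restrict_of_continuous_of_isBounded {X : Type*} [PseudoMetricSpace X] [ProperSpace X]
    [MeasurableSpace X] [BorelSpace X] {μ : Measure X} [IsFiniteMeasureOnCompacts μ] {f : X → ℝ}
    (hf : Continuous f) {Q : Set X} (hQ : MeasurableSet Q) (hbdd : Bornology.IsBounded Q)
    (p : ℝ≥0∞) : MemLp f p (μ.restrict Q) := by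
  have : IsFiniteMeasure (μ.restrict Q) := ⟨by simpa using hbdd.measure_lt_top⟩
  obtain ⟨C, hC⟩ := hbdd.isCompact_closure.exists_bound_of_continuousOn hf.continuousOn
  exact MemLp.of_bound hf.aestronglyMeasurable C
    (ae_restrict_of_forall_mem hQ fun x hx => hC x (subset_closure hx))

section NormedSpace

variable {E : Type*} [NormedAddCommGroup E] [NormedSpace ℝ E] {v : E → ℝ} {K : ℝ≥0}

lemma enorm_sub_sq_le_lintegral_fderiv_lineMap (hv : LipschitzWith K v) {x y : E}
    (hdiff : ∀ᵐ t : ℝ, DifferentiableAt ℝ v (lineMap y x t)) :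
    ‖v x - v y‖ₑ ^ 2 ≤
      ‖x - y‖ₑ ^ 2 * ∫⁻ t in Set.Ioc (0 : ℝ) 1, ‖fderiv ℝ v (lineMap y x t)‖ₑ ^ 2 := by
  have : IsProbabilityMeasure (volume.restrict (Set.Ioc (0 : ℝ) 1)) := ⟨by simp⟩
  set g : ℝ → ℝ := fun t => v (lineMap y x t)
  have hg : LipschitzWith (K * nndist y x) g := hv.comp (lipschitzWith_lineMap y x)
  have hftc : v x - v y = ∫ t in Set.Ioc (0 : ℝ) 1, deriv g t := by
    have hac := (hg.lipschitzOnWith (s := Set.uIcc 0 1)).absolutelyContinuousOnInterval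
    simpa [g, intervalIntegral.integral_of_le] using hac.integral_deriv_eq_sub.symm
  have hderiv : ∀ᵐ t : ℝ, ‖deriv g t‖ₑ ^ 2 ≤
      ‖x - y‖ₑ ^ 2 * ‖fderiv ℝ v (lineMap y x t)‖ₑ ^ 2 := by
    filter_upwards [hdiff] with t ht
    have hderiv : HasDerivAt g (fderiv ℝ v (lineMap y x t) (x - y)) t :=
      ht.hasFDerivAt.comp_hasDerivAt t hasDerivAt_lineMap
    rw [hderiv.deriv, ← mul_pow, mul_comm]
    gcongr
    exact ContinuousLinearMap.le_opENorm _ _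
  calc ‖v x - v y‖ₑ ^ 2
      ≤ (∫⁻ t in Set.Ioc (0 : ℝ) 1, ‖deriv g t‖ₑ) ^ 2 := by
        rw [hftc]
        gcongr
        exact enorm_integral_le_lintegral_enorm _
    _ ≤ ∫⁻ t in Set.Ioc (0 : ℝ) 1, ‖deriv g t‖ₑ ^ 2 :=
        sq_lintegral_le_lintegral_sq (by fun_prop)
    _ ≤ ∫⁻ t in Set.Ioc (0 : ℝ) 1, ‖x - y‖ₑ ^ 2 * ‖fderiv ℝ v (lineMap y x t)‖ₑ ^ 2 :=
        lintegral_mono_ae (ae_restrict_of_ae hderiv)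
    _ = _ := lintegral_const_mul' _ _ (by finiteness)

lemma memLp_norm_fderiv [MeasurableSpace E] [OpensMeasurableSpace E] {ν : Measure E}
    [IsFiniteMeasure ν] (hv : LipschitzWith K v) (p : ℝ≥0∞) :
    MemLp (fun x => ‖fderiv ℝ v x‖) p ν :=
  MemLp.of_bound (measurable_fderiv ℝ v).norm.aestronglyMeasurable K <| ae_of_all _ fun x => by
    simpa only [norm_norm] using norm_fderiv_le_of_lipschitz ℝ hv

end NormedSpace

section Haar

variable {E : Type*} [NormedAddCommGroup E] [NormedSpace ℝ E] [FiniteDimensional ℝ E]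
  [MeasurableSpace E] [BorelSpace E] (μ : Measure E) [μ.IsAddHaarMeasure]

lemma map_lineMap_addHaar (y : E) {s : ℝ} (hs : s ≠ 0) :
    μ.map (fun x => lineMap y x s) = ENNReal.ofReal |(s ^ Module.finrank ℝ E)⁻¹| • μ := by
  have hcomp : (fun x : E => lineMap y x s) = (· + y) ∘ (s • ·) ∘ (· - y) := by
    funext x
    simp [lineMap_apply_module']
  rw [hcomp, ← Measure.map_map (by fun_prop) (by fun_prop),
    ← Measure.map_map (by fun_prop) (by fun_prop),
    (measurePreserving_sub_right μ y).map_eq, Measure.map_addHaar_smul μ hs, Measure.map_smul,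
    (measurePreserving_add_right μ y).map_eq]

variable {μ} {Q : Set E} {F : E → ℝ≥0∞}

lemma setLIntegral_lineMap_le (hQ : MeasurableSet Q) (hconv : Convex ℝ Q) (hF : Measurable F)
    {y : E} (hy : y ∈ Q) {s : ℝ} (hs : s ∈ Set.Icc (1 / 2 : ℝ) 1) :
    ∫⁻ x in Q, F (lineMap y x s) ∂μ ≤ 2 ^ Module.finrank ℝ E * ∫⁻ x in Q, F x ∂μ := by
  have hs0 : 0 < s := one_half_pos.trans_le hs.1
  have hmaps : Set.MapsTo (fun x => lineMap y x s) Q Q :=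
    fun x hx => hconv.lineMap_mem hy hx ⟨hs0.le, hs.2⟩
  have hjac : ENNReal.ofReal |(s ^ Module.finrank ℝ E)⁻¹| ≤ 2 ^ Module.finrank ℝ E := by
    rw [← inv_pow, abs_of_pos (by positivity), ENNReal.ofReal_pow (by positivity)]
    gcongr
    exact ENNReal.ofReal_le_of_le_toReal
      (by simpa using inv_anti₀ one_half_pos hs.1)
  calc ∫⁻ x in Q, F (lineMap y x s) ∂μ
      ≤ ∫⁻ x, Q.indicator F (lineMap y x s) ∂μ := by
        rw [← lintegral_indicator hQ]
        exact lintegral_mono <| Set.indicator_le fun x hx =>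
          (Set.indicator_of_mem (hmaps hx) F).ge
    _ = ENNReal.ofReal |(s ^ Module.finrank ℝ E)⁻¹| * ∫⁻ x in Q, F x ∂μ := by
        rw [← lintegral_map (hF.indicator hQ) (by fun_prop), map_lineMap_addHaar μ y hs0.ne',
          lintegral_smul_measure, lintegral_indicator hQ, smul_eq_mul]
    _ ≤ _ := by gcongr

lemma lintegral_lintegral_lineMap_le (hQ : MeasurableSet Q) (hconv : Convex ℝ Q)
    (hF : Measurable F) {t : ℝ} (ht : t ∈ Set.Icc (0 : ℝ) 1) :
    ∫⁻ y in Q, ∫⁻ x in Q, F (lineMap y x t) ∂μ ∂μ ≤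
      2 ^ Module.finrank ℝ E * (∫⁻ x in Q, F x ∂μ) * μ Q := by
  rw [← setLIntegral_const]
  rcases le_total (1 / 2) t with h | h
  · exact setLIntegral_mono' hQ fun y hy => setLIntegral_lineMap_le hQ hconv hF hy ⟨h, ht.2⟩
  · rw [lintegral_lintegral_swap (by fun_prop)]
    refine setLIntegral_mono' hQ fun x hx => ?_
    simp_rw [← lineMap_apply_one_sub x _ t]
    exact setLIntegral_lineMap_le hQ hconv hF hx ⟨by linarith, by linarith [ht.1]⟩

variable {v : E → ℝ} {K : ℝ≥0}

lemma ae_ae_differentiableAt_lineMap (hv : LipschitzWith K v) (y : E) :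
    ∀ᵐ x ∂μ, ∀ᵐ t : ℝ, DifferentiableAt ℝ v (lineMap y x t) := by
  have hmeas : Measurable fun p : E × ℝ => lineMap (k := ℝ) y p.1 p.2 := by fun_prop
  have hset : MeasurableSet {p : E × ℝ | DifferentiableAt ℝ v (lineMap y p.1 p.2)} :=
    hmeas (measurableSet_of_differentiableAt ℝ v)
  rw [Measure.ae_ae_comm hset]
  filter_upwards [Measure.ae_ne volume (0 : ℝ)] with t ht
  refine ae_of_ae_map (by fun_prop : AEMeasurable (fun x => lineMap y x t) μ) ?_
  rw [map_lineMap_addHaar μ y ht]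
  exact Measure.ae_smul_measure hv.ae_differentiableAt _

lemma lintegral_lintegral_enorm_sub_sq_le (hv : LipschitzWith K v) (hQ : MeasurableSet Q)
    (hconv : Convex ℝ Q) (hdiam : Metric.ediam Q ^ 2 ≠ ∞) :
    ∫⁻ y in Q, ∫⁻ x in Q, ‖v x - v y‖ₑ ^ 2 ∂μ ∂μ ≤
      Metric.ediam Q ^ 2 *
        (2 ^ Module.finrank ℝ E * (∫⁻ x in Q, ‖fderiv ℝ v x‖ₑ ^ 2 ∂μ) * μ Q) := by
  set F : E → ℝ≥0∞ := fun z => ‖fderiv ℝ v z‖ₑ ^ 2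
  have hF : Measurable F := by fun_prop
  calc ∫⁻ y in Q, ∫⁻ x in Q, ‖v x - v y‖ₑ ^ 2 ∂μ ∂μ
      ≤ ∫⁻ y in Q, ∫⁻ x in Q, Metric.ediam Q ^ 2 *
          (∫⁻ t in Set.Ioc (0 : ℝ) 1, F (lineMap y x t)) ∂μ ∂μ := by
        refine setLIntegral_mono' hQ fun y hy => lintegral_mono_ae ?_
        filter_upwards [ae_restrict_of_ae (ae_ae_differentiableAt_lineMap hv y),
          ae_restrict_mem hQ] with x hdiff hx
        refine (enorm_sub_sq_le_lintegral_fderiv_lineMap hv hdiff).trans ?_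
        gcongr
        exact edist_eq_enorm_sub x y ▸ Metric.edist_le_ediam_of_mem hx hy
    _ = Metric.ediam Q ^ 2 * ∫⁻ t in Set.Ioc (0 : ℝ) 1,
          (∫⁻ y in Q, ∫⁻ x in Q, F (lineMap y x t) ∂μ ∂μ) := by
        have hmeas : Measurable fun p : E × E × ℝ => F (lineMap p.1 p.2.1 p.2.2) := by fun_prop
        rw [← lintegral_lintegral_lintegral_rotate hmeas]
        simp_rw [← lintegral_const_mul' _ _ hdiam]
    _ ≤ Metric.ediam Q ^ 2 * ∫⁻ t in Set.Ioc (0 : ℝ) 1,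
          (2 ^ Module.finrank ℝ E * (∫⁻ x in Q, F x ∂μ) * μ Q) := by
        refine mul_le_mul_right (setLIntegral_mono' measurableSet_Ioc fun t ht => ?_) _
        exact lintegral_lintegral_lineMap_le hQ hconv hF (Set.Ioc_subset_Icc_self ht)
    _ = _ := by simp

theorem poincare_inequality_of_convex (hv : LipschitzWith K v)
    (hQ : MeasurableSet Q) (hconv : Convex ℝ Q) (hbdd : Bornology.IsBounded Q)
    (hmean : ∫ x in Q, v x ∂μ = 0) :
    ∫ x in Q, v x ^ 2 ∂μ ≤
      2 ^ Module.finrank ℝ E / 2 * Metric.diam Q ^ 2 * ∫ x in Q, ‖fderiv ℝ v x‖ ^ 2 ∂μ := by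
  have : ProperSpace E := FiniteDimensional.proper ℝ E
  have hfin : μ Q ≠ ∞ := hbdd.measure_lt_top.ne
  rcases eq_or_ne (μ Q) 0 with hzero | hpos
  · simp [Measure.restrict_eq_zero.2 hzero]
  have : IsFiniteMeasure (μ.restrict Q) := ⟨by simpa using hfin.lt_top⟩
  have hvL2 := memLp_restrict_of_continuous_of_isBounded (μ := μ) hv.continuous hQ hbdd 2
  have hgrad : ∫⁻ x in Q, ‖fderiv ℝ v x‖ₑ ^ 2 ∂μ ≠ ∞ := by
    simpa [HasFiniteIntegral] using
      (memLp_norm_fderiv hv 2).integrable_sq.hasFiniteIntegral.ne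
  have hdiam : Metric.ediam Q ^ 2 ≠ ∞ := ENNReal.pow_ne_top hbdd.ediam_ne_top
  have hle := lintegral_lintegral_enorm_sub_sq_le (μ := μ) hv hQ hconv hdiam
  rw [lintegral_lintegral_enorm_sub_sq_of_integral_eq_zero hvL2 hmean] at hle
  have hle' := ENNReal.toReal_mono (by finiteness) hle
  simp only [ENNReal.toReal_mul, ENNReal.toReal_pow, ENNReal.toReal_ofNat,
    Measure.restrict_apply_univ] at hle'
  have hpos' : 0 < (μ Q).toReal := ENNReal.toReal_pos hpos hfin
  rw [integral_sq_eq_toReal_lintegral_enorm_sq hv.continuous.aestronglyMeasurable,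
    integral_sq_eq_toReal_lintegral_enorm_sq (by fun_prop)]
  simp only [enorm_norm]
  refine le_of_mul_le_mul_right ?_ hpos'
  rw [Metric.diam]
  linarith

end Haar
end Poincare

section PeriodicFunctions

variable {d : ℕ}

lemma isBounded_unitCell : Bornology.IsBounded (unitCell d) :=
  Bornology.IsBounded.pi fun _ => Metric.isBounded_Ico 0 1

lemma measurableSet_unitCell : MeasurableSet (unitCell d) :=
  MeasurableSet.univ_pi fun _ => measurableSet_Ico

instance isProbabilityMeasure_restrict_unitCell :
    IsProbabilityMeasure (volume.restrict (unitCell d)) :=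
  ⟨by simp [unitCell, volume_pi_pi]⟩

lemma memLp_unitCell_of_continuous {v : (Fin d → ℝ) → ℝ} (hv : Continuous v) (p : ℝ≥0∞) :
    MemLp v p (volume.restrict (unitCell d)) :=
  memLp_restrict_of_continuous_of_isBounded hv measurableSet_unitCell isBounded_unitCell p

lemma eqOn_zero_of_setIntegral_sq_eq_zero {X : Type*} [PseudoMetricSpace X] [ProperSpace X]
    [MeasurableSpace X] [BorelSpace X] {μ : Measure X} [IsFiniteMeasureOnCompacts μ]
    [μ.IsOpenPosMeasure] {f : X → ℝ} (hf : Continuous f) {s : Set X} (hs : MeasurableSet s)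
    (hbdd : Bornology.IsBounded s) (hint : s ⊆ closure (interior s))
    (hzero : ∫ x in s, f x ^ 2 ∂μ = 0) : Set.EqOn f 0 s := by
  have hfL2 := memLp_restrict_of_continuous_of_isBounded (μ := μ) hf hs hbdd 2
  rw [integral_eq_zero_iff_of_nonneg (fun x => sq_nonneg _) hfL2.integrable_sq] at hzero
  refine Measure.eqOn_of_ae_eq (μ := μ) ?_ hf.continuousOn continuousOn_const hint
  filter_upwards [hzero] with x hx using pow_eq_zero_iff two_ne_zero |>.1 hx

lemma unitCell_subset_closure_interior : unitCell d ⊆ closure (interior (unitCell d)) := by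
  simp only [unitCell, interior_pi_set Set.finite_univ, closure_pi_set, interior_Ico,
    closure_Ioo zero_ne_one]
  exact Set.pi_mono fun i _ => Set.Ico_subset_Icc_self

lemma eq_zero_of_zPeriodic_of_eqOn_unitCell {v : (Fin d → ℝ) → ℝ} (hper : ZPeriodic v)
    (hzero : Set.EqOn v 0 (unitCell d)) : v = 0 := by
  funext x
  have hfract : (fun i => Int.fract (x i)) ∈ unitCell d :=
    fun i _ => ⟨Int.fract_nonneg _, Int.fract_lt_one _⟩
  have hx : x = (fun i => Int.fract (x i)) + fun i => (⌊x i⌋ : ℝ) :=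
    funext fun i => (Int.fract_add_floor (x i)).symm
  rw [hx, hper]
  exact hzero hfract

lemma l2sq_pos {v : (Fin d → ℝ) → ℝ} (hv : v ∈ PeriodicLipschitz d) (hne : v ≠ 0) :
    0 < l2sq v := by
  obtain ⟨hper, K, hlip⟩ := hv
  refine (integral_nonneg fun x => sq_nonneg (v x)).lt_of_ne' fun hzero => hne ?_
  exact eq_zero_of_zPeriodic_of_eqOn_unitCell hper <| eqOn_zero_of_setIntegral_sq_eq_zero
    hlip.continuous measurableSet_unitCell isBounded_unitCell unitCell_subset_closure_interior hzero

end PeriodicFunctions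

section Energy

variable {d : ℕ} {v V : (Fin d → ℝ) → ℝ} {K : ℝ≥0} {B : ℝ}

lemma measurable_gradSq : Measurable (gradSq v) :=
  Finset.measurable_sum _ fun _ _ => (measurable_fderiv_apply_const ℝ v _).pow_const 2

lemma gradSq_nonneg (x : Fin d → ℝ) : 0 ≤ gradSq v x :=
  Finset.sum_nonneg fun _ _ => sq_nonneg _

lemma gradSq_le_mul_norm_fderiv_sq (x : Fin d → ℝ) : gradSq v x ≤ d * ‖fderiv ℝ v x‖ ^ 2 := by
  have hcoord (i : Fin d) : fderiv ℝ v x (Pi.single i 1) ^ 2 ≤ ‖fderiv ℝ v x‖ ^ 2 := by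
    refine sq_le_sq.2 ?_
    simpa [Pi.norm_single] using (fderiv ℝ v x).le_opNorm (Pi.single i 1)
  simpa [gradSq] using Finset.sum_le_sum fun i (_ : i ∈ Finset.univ) => hcoord i

lemma norm_le_sum_norm_apply_single {ι F : Type*} [Fintype ι] [DecidableEq ι]
    [SeminormedAddCommGroup F] [NormedSpace ℝ F] (L : (ι → ℝ) →L[ℝ] F) :
    ‖L‖ ≤ ∑ i, ‖L (Pi.single i 1)‖ := by
  refine L.opNorm_le_bound (by positivity) fun w => ?_
  calc ‖L w‖ = ‖∑ i, w i • L (Pi.single i 1)‖ := by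
        conv_lhs => rw [pi_eq_sum_univ' w, map_sum]
        simp only [map_smul]
    _ ≤ ∑ i, ‖L (Pi.single i 1)‖ * ‖w‖ := norm_sum_le_of_le _ fun i _ => by
        rw [norm_smul, mul_comm]
        gcongr
        exact norm_le_pi_norm w i
    _ = _ := (Finset.sum_mul ..).symm

lemma norm_fderiv_sq_le_mul_gradSq (x : Fin d → ℝ) : ‖fderiv ℝ v x‖ ^ 2 ≤ d * gradSq v x := by
  calc ‖fderiv ℝ v x‖ ^ 2 ≤ (∑ i, ‖fderiv ℝ v x (Pi.single i 1)‖) ^ 2 := by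
        gcongr
        exact norm_le_sum_norm_apply_single _
    _ ≤ d * gradSq v x := by
        simpa [gradSq] using
          sq_sum_le_card_mul_sum_sq (s := .univ) (f := fun i => ‖fderiv ℝ v x (Pi.single i 1)‖)

lemma gradSq_le_of_lipschitzWith (hv : LipschitzWith K v) (x : Fin d → ℝ) :
    gradSq v x ≤ d * K ^ 2 :=
  (gradSq_le_mul_norm_fderiv_sq x).trans (by gcongr; exact norm_fderiv_le_of_lipschitz ℝ hv)

lemma integrable_gradSq {μ : Measure (Fin d → ℝ)} [IsFiniteMeasure μ] (hv : LipschitzWith K v) :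
    Integrable (gradSq v) μ :=
  Integrable.of_bound measurable_gradSq.aestronglyMeasurable (d * (K : ℝ) ^ 2) <|
    ae_of_all _ fun x => by
      simpa only [Real.norm_of_nonneg (gradSq_nonneg x)] using gradSq_le_of_lipschitzWith hv x

lemma integrable_potential_mul_sq (hv : Continuous v) (hV : Measurable V)
    (hVB : ∀ x, V x ∈ Set.Icc 0 B) :
    IntegrableOn (fun x => V x * v x ^ 2) (unitCell d) :=
  (memLp_unitCell_of_continuous hv 2).integrable_sq.bdd_mul hV.aestronglyMeasurable <|
    ae_of_all _ fun x => by simpa only [Real.norm_of_nonneg (hVB x).1] using (hVB x).2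

lemma energySq_eq_gradL2sq_add (hv : LipschitzWith K v) (hV : Measurable V)
    (hVB : ∀ x, V x ∈ Set.Icc 0 B) :
    energySq V v = gradL2sq v + ∫ x in unitCell d, V x * v x ^ 2 :=
  integral_add (integrable_gradSq hv) (integrable_potential_mul_sq hv.continuous hV hVB)

lemma energySq_le (hv : LipschitzWith K v) (hV : Measurable V)
    (hVB : ∀ x, V x ∈ Set.Icc 0 B) : energySq V v ≤ d * K ^ 2 + B * l2sq v := by
  rw [energySq_eq_gradL2sq_add hv hV hVB, l2sq, ← integral_const_mul]
  have hsq := (memLp_unitCell_of_continuous hv.continuous 2).integrable_sq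
  gcongr
  · calc gradL2sq v ≤ ∫ _ in unitCell d, (d * K ^ 2 : ℝ) :=
          integral_mono (integrable_gradSq hv) (integrable_const _) (gradSq_le_of_lipschitzWith hv)
      _ = d * K ^ 2 := by simp
  · exact integrable_potential_mul_sq hv.continuous hV hVB
  · exact hsq.const_mul B
  · exact measurableSet_unitCell.nullMeasurableSet
  · exact (hVB _).2

end Energy

section RayleighQuotient

variable {d : ℕ} {V : (Fin d → ℝ) → ℝ} {B : ℝ} {W : Submodule ℝ ((Fin d → ℝ) → ℝ)}

lemma lipschitzWith_sum_smul {ι X : Type*} [Fintype ι] [PseudoMetricSpace X] {f : ι → X → ℝ}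
    {K : ι → ℝ≥0} (hf : ∀ i, LipschitzWith (K i) (f i)) (a : ι → ℝ) :
    LipschitzWith (‖a‖₊ * ∑ i, K i) (∑ i, a i • f i) := by
  refine LipschitzWith.of_dist_le_mul fun x y => ?_
  simp only [Finset.sum_apply, Pi.smul_apply, NNReal.coe_mul, NNReal.coe_sum, coe_nnnorm,
    Finset.mul_sum, Finset.sum_mul]
  refine dist_sum_sum_le_of_le _ fun i _ => ?_
  rw [dist_smul₀, mul_assoc]
  gcongr
  · exact norm_le_pi_norm a i
  · exact (hf i).dist_le_mul x y

/-- The inclusion of a space of periodic Lipschitz functions into `L²` of the unit cell. -/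
def toL2 (hW : (W : Set ((Fin d → ℝ) → ℝ)) ⊆ PeriodicLipschitz d) :
    W →ₗ[ℝ] Lp ℝ 2 (volume.restrict (unitCell d)) where
  toFun v := (memLp_unitCell_of_continuous (hW v.2).2.choose_spec.continuous 2).toLp v
  map_add' _ _ := MemLp.toLp_add _ _
  map_smul' _ _ := MemLp.toLp_const_smul _ _

lemma norm_toL2_sq (hW : (W : Set ((Fin d → ℝ) → ℝ)) ⊆ PeriodicLipschitz d) (v : W) :
    ‖toL2 hW v‖ ^ 2 = l2sq (v : (Fin d → ℝ) → ℝ) := by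
  rw [← real_inner_self_eq_norm_sq, L2.inner_def]
  refine integral_congr_ae ?_
  filter_upwards [MemLp.coeFn_toLp (memLp_unitCell_of_continuous
    (hW v.2).2.choose_spec.continuous 2)] with x hx
  simp [toL2, hx, sq]

lemma toL2_injective (hW : (W : Set ((Fin d → ℝ) → ℝ)) ⊆ PeriodicLipschitz d) :
    Function.Injective (toL2 hW) := by
  refine (injective_iff_map_eq_zero _).2 fun v hv => by_contra fun hne => ?_
  have hpos := l2sq_pos (hW v.2) fun h => hne (Subtype.ext h)
  rw [← norm_toL2_sq hW, hv] at hpos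
  simp at hpos

lemma exists_energySq_le_mul_l2sq [FiniteDimensional ℝ W]
    (hW : (W : Set ((Fin d → ℝ) → ℝ)) ⊆ PeriodicLipschitz d) (hV : Measurable V)
    (hVB : ∀ x, V x ∈ Set.Icc 0 B) :
    ∃ M, ∀ v ∈ W, energySq V v ≤ M * l2sq v := by
  let b := Module.finBasis ℝ W
  choose K hK using fun i => (hW (b i).2).2
  obtain ⟨C, -, hC⟩ := (toL2 hW ∘ₗ b.equivFun.symm.toLinearMap).exists_antilipschitzWith <|
    LinearMap.ker_eq_bot.2 ((toL2_injective hW).comp b.equivFun.symm.injective)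
  refine ⟨d * (C * ∑ i, K i) ^ 2 + B, fun v hv => ?_⟩
  set a := b.equivFun ⟨v, hv⟩
  have hlip : LipschitzWith (‖a‖₊ * ∑ i, K i) v := by
    have hsum : v = ∑ i, a i • (b i : (Fin d → ℝ) → ℝ) := by
      simpa only [Submodule.coe_sum, Submodule.coe_smul] using
        congrArg Subtype.val (b.sum_equivFun ⟨v, hv⟩).symm
    exact hsum ▸ lipschitzWith_sum_smul hK a
  have hnorm : ‖a‖ ≤ C * ‖toL2 hW ⟨v, hv⟩‖ := by
    simpa [a] using hC.le_mul_dist a 0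
  calc energySq V v ≤ d * (‖a‖ * ∑ i, K i) ^ 2 + B * l2sq v := by
        simpa using energySq_le hlip hV hVB
    _ ≤ d * (C * ‖toL2 hW ⟨v, hv⟩‖ * ∑ i, K i) ^ 2 + B * l2sq v := by gcongr
    _ = (d * (C * ∑ i, K i) ^ 2 + B) * l2sq v := by
        rw [← norm_toL2_sq hW ⟨v, hv⟩]
        ring

end RayleighQuotient

section Subspace

lemma transcendental_of_infinite_range {X 𝕜 : Type*} [Field 𝕜] {f : X → 𝕜}
    (hf : (Set.range f).Infinite) : Transcendental 𝕜 f := by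
  refine transcendental_iff.2 fun p hp => p.eq_zero_of_infinite_isRoot <| hf.mono ?_
  rintro _ ⟨x, rfl⟩
  simpa [Polynomial.aeval_fn_apply] using congrFun hp x

lemma exists_lipschitzWith_aeval {X : Type*} [PseudoMetricSpace X] {f : X → ℝ} {K : ℝ≥0}
    (hf : LipschitzWith K f) {s : Set ℝ} (hs : IsCompact s) (hfs : ∀ x, f x ∈ s)
    (p : Polynomial ℝ) : ∃ C, LipschitzWith C (p.aeval f) := by
  have hp : ContDiff ℝ 1 fun t : ℝ => p.aeval t := p.contDiff_aeval 1
  obtain ⟨C, hC⟩ := hp.locallyLipschitz.locallyLipschitzOn.exists_lipschitzOnWith_of_compact hs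
  refine ⟨C * K, lipschitzOnWith_univ.1 ?_⟩
  rw [Polynomial.aeval_pi_apply]
  exact hC.comp hf.lipschitzOnWith fun x _ => hfs x

lemma exists_submodule_finrank_eq {d : ℕ} (hd : 1 ≤ d) (n : ℕ) :
    ∃ W : Submodule ℝ ((Fin d → ℝ) → ℝ),
      (W : Set ((Fin d → ℝ) → ℝ)) ⊆ PeriodicLipschitz d ∧ Module.finrank ℝ W = n := by
  let phase : (Fin d → ℝ) →L[ℝ] ℝ := (2 * π) • .proj ⟨0, hd⟩
  have hsurj : Function.Surjective phase := fun t =>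
    ⟨fun _ => t / (2 * π), by simp [phase]; field_simp⟩
  have htr : Transcendental ℝ (sin ∘ phase) := transcendental_of_infinite_range <| by
    rw [hsurj.range_comp, range_sin]
    exact Set.Icc_infinite (by norm_num)
  refine ⟨(Polynomial.degreeLT ℝ n).map (Polynomial.aeval (sin ∘ phase)).toLinearMap, ?_, ?_⟩
  · rintro _ ⟨p, -, rfl⟩
    constructor
    · intro x k
      have hper : sin (phase (x + fun i => (k i : ℝ))) = sin (phase x) := by
        rw [map_add, ← sin_add_int_mul_two_pi (phase x) (k ⟨0, hd⟩)]
        simp [phase, mul_comm]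
      simp only [AlgHom.toLinearMap_apply, Polynomial.aeval_pi_apply, Function.comp_apply, hper]
    · exact exists_lipschitzWith_aeval (lipschitzWith_sin.comp phase.lipschitz) isCompact_Icc
        (fun x => sin_mem_Icc (phase x)) p
  · have hinj := transcendental_iff_injective.1 htr
    rw [← (Submodule.equivMapOfInjective _ hinj _).finrank_eq,
      (Polynomial.degreeLTEquiv ℝ n).finrank_eq, Module.finrank_fin_fun]

end Subspace

section Bracketing

lemma exists_ne_zero_forall_setIntegral_eq_zero {X ι : Type*} [MeasurableSpace X] {μ : Measure X}
    [Finite ι] {W : Submodule ℝ (X → ℝ)} {Q : ι → Set X}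
    (hint : ∀ v ∈ W, ∀ k, IntegrableOn v (Q k) μ) (hcard : Nat.card ι < Module.finrank ℝ W) :
    ∃ v ∈ W, v ≠ 0 ∧ ∀ k, ∫ x in Q k, v x ∂μ = 0 := by
  have := Fintype.ofFinite ι
  have : FiniteDimensional ℝ W := .of_finrank_pos (by lia)
  let means : W →ₗ[ℝ] (ι → ℝ) :=
    { toFun := fun v k => ∫ x in Q k, (v : X → ℝ) x ∂μ
      map_add' := fun v w => funext fun k => integral_add (hint v v.2 k) (hint w w.2 k)
      map_smul' := fun c v => funext fun k => integral_const_mul c _ }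
  have hker : LinearMap.ker means ≠ ⊥ :=
    LinearMap.ker_ne_bot_of_finrank_lt (by simpa [← Nat.card_eq_fintype_card] using hcard)
  obtain ⟨v, hv, hne⟩ := Submodule.exists_mem_ne_zero_of_ne_bot hker
  exact ⟨v, v.2, fun h => hne (Subtype.ext h), congrFun (LinearMap.mem_ker.1 hv)⟩

variable {d : ℕ} {V v : (Fin d → ℝ) → ℝ} {B Λ : ℝ} {K : ℝ≥0}

lemma mul_setIntegral_sq_le_setIntegral_gradSq (hv : LipschitzWith K v) (hΛ : 0 ≤ Λ)
    {Q : Set (Fin d → ℝ)} (hQ : MeasurableSet Q) (hconv : Convex ℝ Q)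
    (hbdd : Bornology.IsBounded Q) (hdiam : Λ * (d * 2 ^ d / 2 * Metric.diam Q ^ 2) ≤ 1)
    (hmean : ∫ x in Q, v x = 0) :
    Λ * ∫ x in Q, v x ^ 2 ≤ ∫ x in Q, gradSq v x := by
  have : IsFiniteMeasure (volume.restrict Q) := ⟨by simpa using hbdd.measure_lt_top⟩
  have hgrad : ∫ x in Q, ‖fderiv ℝ v x‖ ^ 2 ≤ d * ∫ x in Q, gradSq v x := by
    rw [← integral_const_mul]
    exact integral_mono (memLp_norm_fderiv hv 2).integrable_sq ((integrable_gradSq hv).const_mul _)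
      norm_fderiv_sq_le_mul_gradSq
  calc Λ * ∫ x in Q, v x ^ 2
      ≤ Λ * (2 ^ d / 2 * Metric.diam Q ^ 2 * (d * ∫ x in Q, gradSq v x)) := by
        have hpoincare := poincare_inequality_of_convex hv hQ hconv hbdd hmean
        rw [Module.finrank_fin_fun] at hpoincare
        gcongr
        exact hpoincare.trans (by gcongr)
    _ = Λ * (d * 2 ^ d / 2 * Metric.diam Q ^ 2) * ∫ x in Q, gradSq v x := by ring
    _ ≤ ∫ x in Q, gradSq v x :=
        mul_le_of_le_one_left (integral_nonneg gradSq_nonneg) hdiam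

/-- A family of pairwise disjoint, measurable, convex subsets of the unit cell: the cells on which
the Poincaré inequality is applied. -/
structure IsConvexPacking {ι : Type*} (Q : ι → Set (Fin d → ℝ)) : Prop where
  measurableSet : ∀ k, MeasurableSet (Q k)
  convex : ∀ k, Convex ℝ (Q k)
  subset : ∀ k, Q k ⊆ unitCell d
  pairwise_disjoint : Pairwise (Function.onFun Disjoint Q)

variable {ι : Type*} [Finite ι] {Q : ι → Set (Fin d → ℝ)}

lemma mul_setIntegral_iUnion_sq_le_gradL2sq (hv : LipschitzWith K v) (hΛ : 0 ≤ Λ)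
    (hQ : IsConvexPacking Q)
    (hdiam : ∀ k, Λ * (d * 2 ^ d / 2 * Metric.diam (Q k) ^ 2) ≤ 1)
    (hmean : ∀ k, ∫ x in Q k, v x = 0) :
    Λ * ∫ x in ⋃ k, Q k, v x ^ 2 ≤ gradL2sq v := by
  have hsq := (memLp_unitCell_of_continuous hv.continuous 2).integrable_sq
  have := Fintype.ofFinite ι
  have hgrad : IntegrableOn (gradSq v) (unitCell d) := integrable_gradSq hv
  calc Λ * ∫ x in ⋃ k, Q k, v x ^ 2 = ∑ k, Λ * ∫ x in Q k, v x ^ 2 := by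
        rw [integral_iUnion_fintype hQ.measurableSet hQ.pairwise_disjoint
            fun k => IntegrableOn.mono_set hsq (hQ.subset k), Finset.mul_sum]
    _ ≤ ∑ k, ∫ x in Q k, gradSq v x := Finset.sum_le_sum fun k _ =>
        mul_setIntegral_sq_le_setIntegral_gradSq hv hΛ (hQ.measurableSet k) (hQ.convex k)
          (isBounded_unitCell.subset (hQ.subset k)) (hdiam k) (hmean k)
    _ = ∫ x in ⋃ k, Q k, gradSq v x :=
        (integral_iUnion_fintype hQ.measurableSet hQ.pairwise_disjoint
          fun k => hgrad.mono_set (hQ.subset k)).symm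
    _ ≤ gradL2sq v :=
        setIntegral_mono_set hgrad (ae_of_all _ gradSq_nonneg)
          (Set.iUnion_subset hQ.subset).eventuallyLE

lemma mul_setIntegral_sdiff_sq_le (hv : Continuous v) (hV : Measurable V)
    (hVB : ∀ x, V x ∈ Set.Icc 0 B) {s : Set (Fin d → ℝ)} (hs : MeasurableSet s)
    (hVΛ : ∀ x ∈ unitCell d \ s, Λ ≤ V x) :
    Λ * ∫ x in unitCell d \ s, v x ^ 2 ≤ ∫ x in unitCell d, V x * v x ^ 2 := by
  have hsq := (memLp_unitCell_of_continuous hv 2).integrable_sq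
  have hVsq := integrable_potential_mul_sq hv hV hVB
  calc Λ * ∫ x in unitCell d \ s, v x ^ 2 = ∫ x in unitCell d \ s, Λ * v x ^ 2 :=
        (integral_const_mul _ _).symm
    _ ≤ ∫ x in unitCell d \ s, V x * v x ^ 2 :=
        setIntegral_mono_on (IntegrableOn.mono_set (hsq.const_mul Λ) Set.sdiff_subset)
          (hVsq.mono_set Set.sdiff_subset) (measurableSet_unitCell.diff hs)
          fun x hx => mul_le_mul_of_nonneg_right (hVΛ x hx) (sq_nonneg _)
    _ ≤ ∫ x in unitCell d, V x * v x ^ 2 :=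
        setIntegral_mono_set hVsq
          (ae_of_all _ fun x => mul_nonneg (hVB x).1 (sq_nonneg _)) Set.sdiff_subset.eventuallyLE

lemma mul_l2sq_le_energySq_of_setIntegral_eq_zero (hv : LipschitzWith K v) (hV : Measurable V)
    (hVB : ∀ x, V x ∈ Set.Icc 0 B) (hΛ : 0 ≤ Λ)
    (hQ : IsConvexPacking Q)
    (hdiam : ∀ k, Λ * (d * 2 ^ d / 2 * Metric.diam (Q k) ^ 2) ≤ 1)
    (hVΛ : ∀ x ∈ unitCell d \ ⋃ k, Q k, Λ ≤ V x) (hmean : ∀ k, ∫ x in Q k, v x = 0) :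
    Λ * l2sq v ≤ energySq V v := by
  have hsq := (memLp_unitCell_of_continuous hv.continuous 2).integrable_sq
  have hunion : MeasurableSet (⋃ k, Q k) := .iUnion hQ.measurableSet
  have hsplit : l2sq v = (∫ x in ⋃ k, Q k, v x ^ 2) + ∫ x in unitCell d \ ⋃ k, Q k, v x ^ 2 := by
    rw [l2sq, ← integral_inter_add_sdiff hunion hsq,
      Set.inter_eq_right.2 (Set.iUnion_subset hQ.subset)]
  rw [hsplit, mul_add, energySq_eq_gradL2sq_add hv hV hVB]
  exact add_le_add
    (mul_setIntegral_iUnion_sq_le_gradL2sq hv hΛ hQ hdiam hmean)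
    (mul_setIntegral_sdiff_sq_le hv.continuous hV hVB hunion hVΛ)

theorem le_minmaxVal_of_card_lt (hd : 1 ≤ d) (hV : Measurable V)
    (hVB : ∀ x, V x ∈ Set.Icc 0 B) (hΛ : 0 ≤ Λ)
    (hQ : IsConvexPacking Q)
    (hdiam : ∀ k, Λ * (d * 2 ^ d / 2 * Metric.diam (Q k) ^ 2) ≤ 1)
    (hVΛ : ∀ x ∈ unitCell d \ ⋃ k, Q k, Λ ≤ V x) {n : ℕ} (hn : Nat.card ι < n) :
    Λ ≤ minmaxVal d V n := by
  refine le_csInf ?_ ?_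
  · obtain ⟨W, hW, hdim⟩ := exists_submodule_finrank_eq hd n
    have : FiniteDimensional ℝ W := .of_finrank_pos (by lia)
    obtain ⟨M, hM⟩ := exists_energySq_le_mul_l2sq hW hV hVB
    exact ⟨M, W, hW, hdim, fun v hv _ => hM v hv⟩
  · rintro M ⟨W, hW, hdim, hM⟩
    have hint (v) (hv : v ∈ W) (k : ι) : IntegrableOn v (Q k) := by
      obtain ⟨-, K, hK⟩ := hW hv
      exact IntegrableOn.mono_set
        ((memLp_unitCell_of_continuous hK.continuous 1).integrable le_rfl) (hQ.subset k)
    obtain ⟨v, hv, hne, hmean⟩ := exists_ne_zero_forall_setIntegral_eq_zero hint (hdim ▸ hn)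
    obtain ⟨-, K, hK⟩ := hW hv
    have hle : Λ * l2sq v ≤ M * l2sq v :=
      (mul_l2sq_le_energySq_of_setIntegral_eq_zero hK hV hVB hΛ hQ hdiam hVΛ
        hmean).trans (hM v hv hne)
    exact le_of_mul_le_mul_right hle (l2sq_pos (hW hv) hne)

end Bracketing

section Checkerboard

variable {d m ℓ : ℕ} {ε δ β B : ℝ} {V : (Fin d → ℝ) → ℝ}

/-- The box of the grid of side length `δ` with index `j`, cut off at the unit cell. -/
def gridBox (δ : ℝ) (j : Fin d → ℤ) : Set (Fin d → ℝ) :=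
  unitCell d ∩ Set.univ.pi fun i => {t | ⌊t / δ⌋ = j i}

/-- The indices `j` for which `[jε/ℓ, (j+1)ε/ℓ)` is contained in one of the valleys
`[2pε, (2p+1)ε)`, `0 ≤ p < m`, of the one-dimensional checkerboard. -/
def valleyIndices (m ℓ : ℕ) : Finset ℤ :=
  (Finset.Ico (0 : ℤ) m ×ˢ Finset.Ico (0 : ℤ) ℓ).image fun p => 2 * p.1 * ℓ + p.2

lemma setOf_floor_div_eq (hδ : 0 < δ) (n : ℤ) :
    {t : ℝ | ⌊t / δ⌋ = n} = Set.Ico (n * δ) ((n + 1) * δ) := by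
  ext t
  simp only [Set.mem_ofPred_eq, Set.mem_Ico, Int.floor_eq_iff, le_div_iff₀ hδ, div_lt_iff₀ hδ]

lemma isConvexPacking_gridBox (hδ : 0 < δ) {ι : Type*} {k : ι → Fin d → ℤ}
    (hk : Function.Injective k) : IsConvexPacking fun i => gridBox δ (k i) where
  measurableSet i := by
    simp only [gridBox, setOf_floor_div_eq hδ]
    exact measurableSet_unitCell.inter (.univ_pi fun _ => measurableSet_Ico)
  convex i := by
    simp only [gridBox, setOf_floor_div_eq hδ]
    exact (convex_pi fun _ _ => convex_Ico _ _).inter (convex_pi fun _ _ => convex_Ico _ _)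
  subset i := Set.inter_subset_left
  pairwise_disjoint i j hij := Set.disjoint_left.2 fun x hi hj => hij <| hk <| funext fun a =>
    (hi.2 a trivial).symm.trans (hj.2 a trivial)

lemma diam_gridBox_le (hδ : 0 < δ) (j : Fin d → ℤ) : Metric.diam (gridBox δ j) ≤ δ := by
  refine Metric.diam_le_of_forall_dist_le hδ.le fun x hx y hy =>
    (dist_pi_le_iff hδ.le).2 fun i => ?_
  have hmem {z} (hz : z ∈ gridBox δ j) : z i ∈ Set.Icc (j i * δ) ((j i + 1) * δ) :=
    Set.Ico_subset_Icc_self (setOf_floor_div_eq hδ (j i) ▸ hz.2 i trivial)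
  exact (Real.dist_le_of_mem_Icc (hmem hx) (hmem hy)).trans_eq (by ring)

lemma card_valleyIndices_le : (valleyIndices m ℓ).card ≤ m * ℓ :=
  Finset.card_image_le.trans (by simp)

lemma floor_mem_valleyIndices (hε : 0 < ε) (hm : 2 * ε * m = 1) (hℓ : 0 < ℓ) {t : ℝ}
    (ht : t ∈ Set.Ico (0 : ℝ) 1) (heven : Even ⌊t / ε⌋) : ⌊t / (ε / ℓ)⌋ ∈ valleyIndices m ℓ := by
  set j := ⌊t / (ε / ℓ)⌋
  have hfloor : ⌊t / ε⌋ = j / ℓ := by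
    rw [← Int.floor_div_natCast]
    congr 1
    field_simp
  obtain ⟨p, hp⟩ := heven
  have hnonneg : 0 ≤ ⌊t / ε⌋ := Int.floor_nonneg.2 (div_nonneg ht.1 hε.le)
  have hlt : ⌊t / ε⌋ < 2 * m := by
    rw [Int.floor_lt, div_lt_iff₀ hε]
    push_cast
    linarith [ht.2]
  have hℓ' : (0 : ℤ) < ℓ := by exact_mod_cast hℓ
  simp only [valleyIndices, Finset.mem_image, Finset.mem_product, Finset.mem_Ico, Prod.exists]
  refine ⟨p, j % ℓ, ⟨by lia, Int.emod_nonneg j hℓ'.ne', Int.emod_lt_of_pos j hℓ'⟩, ?_⟩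
  rw [two_mul, ← hp, hfloor, mul_comm, Int.mul_ediv_add_emod]

lemma exists_mem_gridBox (hε : 0 < ε) (hm : 2 * ε * m = 1) (hℓ : 0 < ℓ) {x : Fin d → ℝ}
    (hx : x ∈ unitCell d) (heven : ∀ i, Even ⌊x i / ε⌋) :
    ∃ k : Fin d → valleyIndices m ℓ, x ∈ gridBox (ε / ℓ) fun i => k i :=
  ⟨fun i => ⟨_, floor_mem_valleyIndices hε hm hℓ (hx i trivial) (heven i)⟩, hx, fun _ _ => rfl⟩

theorem statement16_general (hd : 1 ≤ d) (hε : 0 < ε) (hm : 2 * ε * m = 1)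
    (hV : Measurable V) (hVB : ∀ x, V x ∈ Set.Icc 0 B) (hβ : 0 ≤ β)
    (hVβ : ∀ x, (¬ ∀ i, Even ⌊x i / ε⌋) → β ≤ V x) (hℓ : 0 < ℓ) :
    min β (2 / (d * 2 ^ d) * ℓ ^ 2 / ε ^ 2) ≤ minmaxVal d V (m ^ d * ℓ ^ d + 1) := by
  have hδ : 0 < ε / ℓ := div_pos hε (Nat.cast_pos.2 hℓ)
  have hinj : Function.Injective fun (k : Fin d → valleyIndices m ℓ) i => (k i : ℤ) :=
    fun k k' h => funext fun i => Subtype.ext (congrFun h i)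
  refine le_minmaxVal_of_card_lt hd hV hVB (le_min hβ (by positivity))
    (isConvexPacking_gridBox hδ hinj) ?_ ?_ ?_
  · intro k
    have hdiam := diam_gridBox_le hδ fun i => (k i : ℤ)
    calc min β (2 / (d * 2 ^ d) * ℓ ^ 2 / ε ^ 2) *
          (d * 2 ^ d / 2 * Metric.diam (gridBox (ε / ℓ) fun i => (k i : ℤ)) ^ 2)
        ≤ 2 / (d * 2 ^ d) * ℓ ^ 2 / ε ^ 2 * (d * 2 ^ d / 2 * (ε / ℓ) ^ 2) := by
          gcongr
          exact min_le_right _ _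
      _ = 1 := by field_simp
  · rintro x ⟨hx, hnot⟩
    refine (min_le_left _ _).trans (hVβ x fun heven => hnot ?_)
    exact Set.mem_iUnion.2 (exists_mem_gridBox hε hm hℓ hx heven)
  · rw [Nat.lt_succ_iff, ← mul_pow]
    simpa using Nat.pow_le_pow_left card_valleyIndices_le d

lemma measurableSet_even_floor_div : MeasurableSet {x : Fin d → ℝ | ∀ i, Even ⌊x i / ε⌋} := by
  simp only [Set.ofPred_forall]
  refine .iInter fun i => ?_
  exact (by fun_prop : Measurable fun x : Fin d → ℝ => ⌊x i / ε⌋)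
    (MeasurableSet.of_discrete (s := {n : ℤ | Even n}))

end Checkerboard

open scoped Classical in
/-- Lemma 5.3 of the paper: lower eigenvalue bound for the periodic
checkerboard potential. With `1/(2ε) = m ∈ ℕ`, `V(x) = α` iff `⌊xᵢ/ε⌋` is even for all
`i` (and `β` otherwise), and `N = (2ε)^{-d} = m^d`, there are constants `c, c' > 0`
depending only on `d` such that for every integer `ℓ ≥ 2`, if `β ≥ c'(ℓ-1)²ε⁻²`, then
`μ_{Nℓ^d + 1} ≥ c (ℓ-1)²/ε²`. -/
theorem statement16 (d : ℕ) (hd : 1 ≤ d) :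
    ∃ c : ℝ, 0 < c ∧ ∃ c' : ℝ, 0 < c' ∧
      ∀ (ε α β : ℝ) (V : (Fin d → ℝ) → ℝ) (m : ℕ),
        0 < ε → 0 < m → 2 * ε * (m : ℝ) = 1 →
        0 ≤ α → α ≤ β →
        (∀ x : Fin d → ℝ, V x = if ∀ i, Even ⌊x i / ε⌋ then α else β) →
        ∀ ℓ : ℕ, 2 ≤ ℓ → c' * ((ℓ : ℝ) - 1) ^ 2 / ε ^ 2 ≤ β →
          c * ((ℓ : ℝ) - 1) ^ 2 / ε ^ 2 ≤ minmaxVal d V (m ^ d * ℓ ^ d + 1) := by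
  refine ⟨2 / (d * 2 ^ d), by positivity, 2 / (d * 2 ^ d), by positivity, ?_⟩
  intro ε α β V m hε _ hm hα hαβ hV ℓ hℓ hβ
  have hmeas : Measurable V := by
    rw [funext hV]
    exact Measurable.ite measurableSet_even_floor_div measurable_const measurable_const
  have hVβ (x : Fin d → ℝ) (hx : ¬ ∀ i, Even ⌊x i / ε⌋) : β ≤ V x := by rw [hV, if_neg hx]
  have hVB (x : Fin d → ℝ) : V x ∈ Set.Icc 0 β := by
    rw [hV]
    split_ifs
    exacts [⟨hα, hαβ⟩, ⟨hα.trans hαβ, le_rfl⟩]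
  refine le_trans (le_min hβ ?_)
    (statement16_general hd hε hm hmeas hVB (hα.trans hαβ) hVβ (by lia : 0 < ℓ))
  have hℓ' : (2 : ℝ) ≤ ℓ := by exact_mod_cast hℓ
  gcongr <;> linarith

end
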